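/- arXiv:2601.15258 — 5 statements merged into one kernel-verified Lean document; each statement's English description precedes it below -/
import Mathlib

section
/- In the max-variant with k = 2 facilities, for every even m ≥ 2 and every ε ∈ (0, 1/m], the mechanism M_m(1/2, 1/2, 1/2 + ε), which opens the facilities at the two median representative locations, has approximation ratio at most 4: on every instance with m groups its output has social cost at most 4 times the minimum social cost over all feasible solutions. -/
open Finset

noncomputable section

/-- A distributed facility location setting for `k` facilities and `m` groups:
`n ≥ 2` agents on the real line, partitioned into `m ≥ k` disjoint nonempty groups. -/
structure FLSetting (k m : ℕ) where
  n : ℕ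
  hn : 2 ≤ n
  hmk : k ≤ m
  grp : Fin n → Fin m
  surj : Function.Surjective grp

/-- A two-phase mechanism for `k` facilities: for each number `m` of groups, a
representative function on finite multisets of reals, and a selection function
producing the `k` facility locations from the multiset of representatives. -/
structure TwoPhase (k : ℕ) where
  rep : ℕ → Multiset ℝ → ℝ
  sel : ℕ → Multiset ℝ → Fin k → ℝ

/-- Validity of a two-phase mechanism: the representative of a nonempty multiset
is one of its elements, and the selected facility locations form a sub-multiset
of the representatives. -/
def TwoPhase.Valid {k : ℕ} (M : TwoPhase k) : Prop :=
  (∀ (m : ℕ) (S : Multiset ℝ), S ≠ 0 → M.rep m S ∈ S) ∧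
  (∀ (m : ℕ) (R : Multiset ℝ), Multiset.card R = m → k ≤ m →
    (↑(List.ofFn (M.sel m R)) : Multiset ℝ) ≤ R)

/-- The multiset of (reported) positions of the agents in group `j`. -/
def groupMS {k m : ℕ} (S : FLSetting k m) (x : Fin S.n → ℝ) (j : Fin m) : Multiset ℝ :=
  (Finset.univ.filter (fun i => S.grp i = j)).val.map x

/-- The number of agents in group `j`. -/
def groupSize {k m : ℕ} (S : FLSetting k m) (j : Fin m) : ℕ :=
  (Finset.univ.filter (fun i => S.grp i = j)).card

/-- The multiset of the `m` group representatives. -/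
def repsMS {k m : ℕ} (M : TwoPhase k) (S : FLSetting k m) (x : Fin S.n → ℝ) : Multiset ℝ :=
  (Finset.univ.val.map fun j : Fin m => M.rep m (groupMS S x j))

/-- The facility locations output by mechanism `M` on reported positions `x`. -/
def outcome {k m : ℕ} (M : TwoPhase k) (S : FLSetting k m) (x : Fin S.n → ℝ) : Fin k → ℝ :=
  M.sel m (repsMS M S x)

/-- Sum-variant individual cost: total distance to all facilities. -/
def sumCost (k : ℕ) (xi : ℝ) (y : Fin k → ℝ) : ℝ := ∑ ℓ, |xi - y ℓ|

/-- Max-variant individual cost: distance to the farthest facility. -/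
def maxCost (k : ℕ) (xi : ℝ) (y : Fin k → ℝ) : ℝ := ⨆ ℓ, |xi - y ℓ|

/-- Social cost: average over groups of the average individual cost within the group. -/
def SC {k m : ℕ} (cost : ℝ → (Fin k → ℝ) → ℝ) (S : FLSetting k m) (x : Fin S.n → ℝ)
    (y : Fin k → ℝ) : ℝ :=
  (1 / (m : ℝ)) * ∑ j : Fin m,
    (1 / (groupSize S j : ℝ)) *
      ∑ i ∈ Finset.univ.filter (fun i => S.grp i = j), cost (x i) y

/-- A feasible solution opens the `k` facilities at the positions of `k` distinct agents. -/
def Feasible {k m : ℕ} (S : FLSetting k m) (x : Fin S.n → ℝ) (y : Fin k → ℝ) : Prop :=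
  ∃ f : Fin k → Fin S.n, Function.Injective f ∧ ∀ ℓ, y ℓ = x (f ℓ)

/-- Strategyproofness with respect to an individual cost function. -/
def Strategyproof {k : ℕ} (cost : ℝ → (Fin k → ℝ) → ℝ) (M : TwoPhase k) : Prop :=
  ∀ (m : ℕ) (S : FLSetting k m) (x : Fin S.n → ℝ) (i : Fin S.n) (x' : ℝ),
    cost (x i) (outcome M S x) ≤ cost (x i) (outcome M S (Function.update x i x'))

/-- Strategyproofness restricted to instances with exactly `m` groups. -/
def StrategyproofOn {k : ℕ} (cost : ℝ → (Fin k → ℝ) → ℝ) (M : TwoPhase k) (m : ℕ) : Prop :=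
  ∀ (S : FLSetting k m) (x : Fin S.n → ℝ) (i : Fin S.n) (x' : ℝ),
    cost (x i) (outcome M S x) ≤ cost (x i) (outcome M S (Function.update x i x'))

/-- The `t`-th leftmost element of a multiset of reals (1-indexed). -/
def kthLeftmost (S : Multiset ℝ) (t : ℕ) : ℝ := (S.sort (· ≤ ·)).getD (t - 1) 0

/-- The mechanism `M_m(θ, ℓ, r)` for two facilities: each group's representative is the
position of its `⌈θ·n_g⌉`-th leftmost agent, and the facilities are opened at the
`⌈ℓm⌉`-th and `⌈rm⌉`-th leftmost representative locations. -/
def Mmech (θ l r : ℝ) : TwoPhase 2 where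
  rep := fun _ S => kthLeftmost S ⌈θ * (Multiset.card S : ℝ)⌉₊
  sel := fun m R => ![kthLeftmost R ⌈l * (m : ℝ)⌉₊, kthLeftmost R ⌈r * (m : ℝ)⌉₊]

theorem kthLeftmost_eq_getElem {S : Multiset ℝ} {t : ℕ} (h1 : 1 ≤ t) (h2 : t ≤ S.card) :
    kthLeftmost S t = (S.sort (· ≤ ·))[t - 1]'(by simp; omega) := by
  rw [kthLeftmost, List.getD_eq_getElem]

theorem kthLeftmost_mono {S : Multiset ℝ} {t u : ℕ} (h1 : 1 ≤ t) (htu : t ≤ u)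
    (hu : u ≤ S.card) : kthLeftmost S t ≤ kthLeftmost S u := by
  rw [kthLeftmost_eq_getElem h1 (htu.trans hu), kthLeftmost_eq_getElem (h1.trans htu) hu]
  exact (S.pairwise_sort (· ≤ ·)).sortedLE.getElem_le_getElem_of_le (by omega)

/-- At least `t` elements are at most the `t`-th leftmost one. -/
theorem le_countP_le_kthLeftmost {S : Multiset ℝ} {t : ℕ} (h1 : 1 ≤ t) (h2 : t ≤ S.card) :
    t ≤ S.countP (· ≤ kthLeftmost S t) := by
  have hlen : (S.sort (· ≤ ·)).length = S.card := by simp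
  have hall : ((S.sort (· ≤ ·)).take t).countP (· ≤ kthLeftmost S t) = t := by
    trans ((S.sort (· ≤ ·)).take t).length
    · refine List.countP_eq_length.2 fun a ha => ?_
      obtain ⟨i, hi, rfl⟩ := List.mem_take_iff_getElem.1 ha
      rw [kthLeftmost_eq_getElem h1 h2, decide_eq_true_eq]
      exact (S.pairwise_sort (· ≤ ·)).sortedLE.getElem_le_getElem_of_le (by omega)
    · rw [List.length_take]; omega
  conv_rhs => rw [← Multiset.sort_eq S (· ≤ ·)]
  rw [Multiset.coe_countP]
  conv_lhs => rw [← hall]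
  simpa using (List.take_sublist t (S.sort (· ≤ ·))).countP_le

/-- At least `|S| - t + 1` elements are at least the `t`-th leftmost one. -/
theorem card_lt_countP_kthLeftmost_le_add {S : Multiset ℝ} {t : ℕ} (h1 : 1 ≤ t)
    (h2 : t ≤ S.card) : S.card < S.countP (kthLeftmost S t ≤ ·) + t := by
  have hlen : (S.sort (· ≤ ·)).length = S.card := by simp
  have hall : ((S.sort (· ≤ ·)).drop (t - 1)).countP (kthLeftmost S t ≤ ·)
      = S.card - (t - 1) := by
    trans ((S.sort (· ≤ ·)).drop (t - 1)).length
    · refine List.countP_eq_length.2 fun a ha => ?_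
      obtain ⟨i, hi, rfl⟩ := List.mem_drop_iff_getElem.1 ha
      rw [kthLeftmost_eq_getElem h1 h2, decide_eq_true_eq]
      exact (S.pairwise_sort (· ≤ ·)).sortedLE.getElem_le_getElem_of_le (by omega)
    · rw [List.length_drop]; omega
  have hle : ((S.sort (· ≤ ·)).drop (t - 1)).countP (kthLeftmost S t ≤ ·)
      ≤ S.countP (kthLeftmost S t ≤ ·) := by
    conv_rhs => rw [← Multiset.sort_eq S (· ≤ ·)]
    rw [Multiset.coe_countP]
    simpa using (List.drop_sublist (t - 1) (S.sort (· ≤ ·))).countP_le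
  omega

theorem countP_map_val {ι : Type*} (s : Finset ι) (f : ι → ℝ) (p : ℝ → Prop)
    [DecidablePred p] : (s.val.map f).countP p = #{i ∈ s | p (f i)} := by
  rw [Multiset.countP_map]; rfl

theorem abs_median_sub_mul_card_le {ι : Type*} {s : Finset ι} {x : ι → ℝ} {v : ℝ}
    (hl : #s ≤ 2 * #{i ∈ s | x i ≤ v}) (hr : #s ≤ 2 * #{i ∈ s | v ≤ x i}) (c : ℝ) :
    |v - c| * #s ≤ 2 * ∑ i ∈ s, |x i - c| := by
  have key : ∀ p : ι → Prop, ∀ [DecidablePred p], #s ≤ 2 * #{i ∈ s | p i} →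
      (∀ i, p i → |v - c| ≤ |x i - c|) → |v - c| * #s ≤ 2 * ∑ i ∈ s, |x i - c| := by
    intro p _ hp h
    have h1 : #{i ∈ s | p i} * |v - c| ≤ ∑ i ∈ s, |x i - c| := by
      calc _ = ∑ i ∈ s with p i, |v - c| := by simp
        _ ≤ ∑ i ∈ s with p i, |x i - c| :=
          sum_le_sum fun i hi => h i (mem_filter.1 hi).2
        _ ≤ _ := sum_le_sum_of_subset_of_nonneg (filter_subset _ _)
          fun i _ _ => abs_nonneg _
    have h2 : (#s : ℝ) ≤ 2 * #{i ∈ s | p i} := by exact_mod_cast hp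
    nlinarith [abs_nonneg (v - c)]
  rcases le_total c v with h | h
  · refine key _ hr fun i hi => ?_
    rw [abs_of_nonneg (by linarith), abs_of_nonneg (by linarith)]; linarith
  · refine key _ hl fun i hi => ?_
    rw [abs_of_nonpos (by linarith), abs_of_nonpos (by linarith)]; linarith

/-- Moving the target towards a point with half of the agents behind it does not
increase the total distance. -/
theorem sum_abs_sub_le_of_le {ι : Type*} {s : Finset ι} {x : ι → ℝ} {v c c' : ℝ}
    (hr : #s ≤ 2 * #{i ∈ s | v ≤ x i}) (h : c ≤ c') (h' : c' ≤ v) :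
    ∑ i ∈ s, |x i - c'| ≤ ∑ i ∈ s, |x i - c| := by
  have hr' : (#s : ℝ) ≤ 2 * #{i ∈ s | v ≤ x i} := by exact_mod_cast hr
  calc ∑ i ∈ s, |x i - c'|
      ≤ ∑ i ∈ s, (|x i - c| + (c' - c) * (1 - 2 * if v ≤ x i then 1 else 0)) := by
        refine sum_le_sum fun i _ => ?_
        split_ifs with hi
        · rw [abs_of_nonneg (by linarith), abs_of_nonneg (by linarith)]; linarith
        · have := abs_sub_le (x i) c c'
          rw [abs_sub_comm c c', abs_of_nonneg (sub_nonneg.2 h)] at this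
          linarith
    _ = ∑ i ∈ s, |x i - c| + (c' - c) * (#s - 2 * #{i ∈ s | v ≤ x i}) := by
        rw [sum_add_distrib, ← mul_sum, sum_sub_distrib, ← mul_sum]
        simp
    _ ≤ _ := by nlinarith

theorem sum_abs_sub_le_of_ge {ι : Type*} {s : Finset ι} {x : ι → ℝ} {v c c' : ℝ}
    (hl : #s ≤ 2 * #{i ∈ s | x i ≤ v}) (h : c' ≤ c) (h' : v ≤ c') :
    ∑ i ∈ s, |x i - c'| ≤ ∑ i ∈ s, |x i - c| := by
  have := sum_abs_sub_le_of_le (s := s) (x := fun i => -x i) (v := -v) (c := -c) (c' := -c')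
    (by simpa using hl) (by linarith) (by linarith)
  simpa only [neg_sub_neg, abs_sub_comm] using this

/-- The aggregate bound over groups with representatives `r`, average distances `A` to the
point `c` and `B` to the midpoint of `w₁` and `w₂`, when `c` is left of that midpoint. -/
theorem sum_add_le_four_mul_sum_of_le {ι : Type*} [Fintype ι] {A B r : ι → ℝ}
    {w₁ w₂ c : ℝ} (hw : w₁ ≤ w₂)
    (hA : ∀ j, |r j - c| ≤ 2 * A j) (hB : ∀ j, B j ≤ A j + |(w₁ + w₂) / 2 - c|)
    (hBr : ∀ j, (w₁ + w₂) / 2 ≤ r j → B j ≤ A j)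
    (hl : Fintype.card ι ≤ 2 * #{j | r j ≤ w₁}) (hr : Fintype.card ι ≤ 2 * #{j | w₂ ≤ r j})
    (hc : c ≤ (w₁ + w₂) / 2) :
    ∑ j, (B j + (w₂ - w₁) / 2) ≤ 4 * ∑ j, A j := by
  have hl' : (Fintype.card ι : ℝ) ≤ 2 * #{j | r j ≤ w₁} := by exact_mod_cast hl
  have hr' : (Fintype.card ι : ℝ) ≤ 2 * #{j | w₂ ≤ r j} := by exact_mod_cast hr
  have hN : (0 : ℝ) ≤ Fintype.card ι := Nat.cast_nonneg _
  have hBsum : ∑ j, B j ≤ ∑ j, A j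
      + ((w₁ + w₂) / 2 - c) * (Fintype.card ι - #{j | w₂ ≤ r j}) := by
    calc ∑ j, B j
        ≤ ∑ j, (A j + ((w₁ + w₂) / 2 - c) * (1 - if w₂ ≤ r j then 1 else 0)) := by
          refine sum_le_sum fun j _ => ?_
          split_ifs with hj
          · linarith [hBr j (by linarith)]
          · have := hB j
            rw [abs_of_nonneg (by linarith)] at this
            linarith
      _ = _ := by
          rw [sum_add_distrib, ← mul_sum, sum_sub_distrib]
          simp
  have hsum : ∑ j, (B j + (w₂ - w₁) / 2)
      = ∑ j, B j + Fintype.card ι * ((w₂ - w₁) / 2) := by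
    simp [sum_add_distrib]
  rw [hsum]
  rcases le_total c w₁ with h | h
  · have hAsum : (w₂ - c) * #{j | w₂ ≤ r j} ≤ 2 * ∑ j, A j := by
      calc _ = ∑ j, (w₂ - c) * (if w₂ ≤ r j then 1 else 0) := by
            rw [← mul_sum]; simp
        _ ≤ ∑ j, 2 * A j := by
            refine sum_le_sum fun j _ => ?_
            refine le_trans ?_ (hA j)
            split_ifs with hj
            · linarith [le_abs_self (r j - c)]
            · simp
        _ = _ := by rw [mul_sum]
    nlinarith
  · have hAsum : (c - w₁) * #{j | r j ≤ w₁} + (w₂ - c) * #{j | w₂ ≤ r j}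
        ≤ 2 * ∑ j, A j := by
      calc _ = ∑ j, ((c - w₁) * (if r j ≤ w₁ then 1 else 0)
              + (w₂ - c) * (if w₂ ≤ r j then 1 else 0)) := by
            rw [sum_add_distrib, ← mul_sum, ← mul_sum]; simp
        _ ≤ ∑ j, 2 * A j := by
            refine sum_le_sum fun j _ => ?_
            refine le_trans ?_ (hA j)
            have h1 := le_abs_self (r j - c)
            have h2 := neg_le_abs (r j - c)
            have h3 := abs_nonneg (r j - c)
            split_ifs <;> linarith
        _ = _ := by rw [mul_sum]
    have h1 : (c - w₁) * Fintype.card ι ≤ (c - w₁) * (2 * #{j | r j ≤ w₁}) :=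
      mul_le_mul_of_nonneg_left hl' (by linarith)
    have h2 : (w₂ - c) * Fintype.card ι ≤ (w₂ - c) * (2 * #{j | w₂ ≤ r j}) :=
      mul_le_mul_of_nonneg_left hr' (by linarith)
    have h3 : ((w₁ + w₂) / 2 - c) * Fintype.card ι
        ≤ ((w₁ + w₂) / 2 - c) * (2 * #{j | w₂ ≤ r j}) :=
      mul_le_mul_of_nonneg_left hr' (by linarith)
    have h4 : 0 ≤ (c - w₁) * Fintype.card ι := mul_nonneg (by linarith) hN
    nlinarith

theorem sum_add_le_four_mul_sum {ι : Type*} [Fintype ι] {A B r : ι → ℝ}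
    {w₁ w₂ c : ℝ} (hw : w₁ ≤ w₂)
    (hA : ∀ j, |r j - c| ≤ 2 * A j) (hB : ∀ j, B j ≤ A j + |(w₁ + w₂) / 2 - c|)
    (hBr : ∀ j, c ≤ (w₁ + w₂) / 2 → (w₁ + w₂) / 2 ≤ r j → B j ≤ A j)
    (hBl : ∀ j, (w₁ + w₂) / 2 ≤ c → r j ≤ (w₁ + w₂) / 2 → B j ≤ A j)
    (hl : Fintype.card ι ≤ 2 * #{j | r j ≤ w₁}) (hr : Fintype.card ι ≤ 2 * #{j | w₂ ≤ r j}) :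
    ∑ j, (B j + (w₂ - w₁) / 2) ≤ 4 * ∑ j, A j := by
  rcases le_total c ((w₁ + w₂) / 2) with h | h
  · exact sum_add_le_four_mul_sum_of_le hw hA hB (fun j => hBr j h) hl hr h
  · have := sum_add_le_four_mul_sum_of_le (A := A) (B := B) (r := fun j => -r j)
      (w₁ := -w₂) (w₂ := -w₁) (c := -c) (by linarith)
      (fun j => by simpa only [neg_sub_neg, abs_sub_comm] using hA j)
      (fun j => by
        rw [show (-w₂ + -w₁) / 2 - -c = -((w₁ + w₂) / 2 - c) by ring, abs_neg]
        exact hB j)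
      (fun j hj => hBl j h (by linarith)) (by simpa using hr) (by simpa using hl)
      (by linarith)
    rwa [show (-w₁ - -w₂) / 2 = (w₂ - w₁) / 2 by ring] at this

theorem maxCost_two (a : ℝ) (y : Fin 2 → ℝ) :
    maxCost 2 a y = max |a - y 0| |a - y 1| := by
  refine le_antisymm (ciSup_le fun ℓ => ?_) (max_le ?_ ?_)
  · fin_cases ℓ <;> simp
  · exact le_ciSup (f := fun ℓ => |a - y ℓ|) (Set.finite_range _).bddAbove 0
  · exact le_ciSup (f := fun ℓ => |a - y ℓ|) (Set.finite_range _).bddAbove 1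

theorem abs_sub_midpoint_le_maxCost (a : ℝ) (y : Fin 2 → ℝ) :
    |a - (y 0 + y 1) / 2| ≤ maxCost 2 a y := by
  rw [maxCost_two]
  have h0 := le_max_left |a - y 0| |a - y 1|
  have h1 := le_max_right |a - y 0| |a - y 1|
  rw [abs_le] at h0 h1 ⊢
  constructor <;> linarith [h0.1, h0.2, h1.1, h1.2]

theorem maxCost_le_abs_sub_midpoint_add (a : ℝ) {y : Fin 2 → ℝ} (hy : y 0 ≤ y 1) :
    maxCost 2 a y ≤ |a - (y 0 + y 1) / 2| + (y 1 - y 0) / 2 := by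
  rw [maxCost_two]
  have h0 := le_abs_self (a - (y 0 + y 1) / 2)
  have h1 := neg_le_abs (a - (y 0 + y 1) / 2)
  refine max_le ?_ ?_ <;> rw [abs_le] <;> constructor <;> linarith

theorem median_counts {ι : Type*} {s : Finset ι} (hs : s.Nonempty) (x : ι → ℝ) :
    #s ≤ 2 * #{i ∈ s | x i ≤ kthLeftmost (s.val.map x) ⌈(1 / 2 : ℝ) * #s⌉₊} ∧
    #s ≤ 2 * #{i ∈ s | kthLeftmost (s.val.map x) ⌈(1 / 2 : ℝ) * #s⌉₊ ≤ x i} := by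
  have hpos : 0 < #s := hs.card_pos
  have hpos' : (0 : ℝ) < #s := by exact_mod_cast hpos
  have hcard : (s.val.map x).card = #s := by simp
  set t := ⌈(1 / 2 : ℝ) * #s⌉₊ with ht
  have h1 : 1 ≤ t := Nat.one_le_ceil_iff.2 (by positivity)
  have hge : #s ≤ 2 * t := by
    have := Nat.le_ceil ((1 / 2 : ℝ) * #s)
    rw [← ht] at this
    exact_mod_cast (by linarith : (#s : ℝ) ≤ 2 * t)
  have hlt : 2 * t < #s + 2 := by
    have := Nat.ceil_lt_add_one (a := (1 / 2 : ℝ) * #s) (by positivity)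
    rw [← ht] at this
    exact_mod_cast (by linarith : (2 * t : ℝ) < #s + 2)
  have hl := le_countP_le_kthLeftmost (S := s.val.map x) h1 (by omega)
  have hr := card_lt_countP_kthLeftmost_le_add (S := s.val.map x) h1 (by omega)
  rw [countP_map_val] at hl hr
  omega

/-- In the max-variant with two facilities, for every even `m ≥ 2` and `ε ∈ (0, 1/m]`,
the mechanism `M_m(1/2, 1/2, 1/2 + ε)` has approximation ratio at most `4`. -/
theorem stmt9 (m : ℕ) (hm : 2 ≤ m) (hmeven : Even m) (ε : ℝ)
    (hε : ε ∈ Set.Ioc (0 : ℝ) (1 / (m : ℝ)))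
    (S : FLSetting 2 m) (x : Fin S.n → ℝ) (y : Fin 2 → ℝ) (hy : Feasible S x y) :
    SC (maxCost 2) S x (outcome (Mmech (1 / 2) (1 / 2) (1 / 2 + ε)) S x)
      ≤ 4 * SC (maxCost 2) S x y := by
  have hm0 : (0 : ℝ) < m := by exact_mod_cast (by omega : 0 < m)
  obtain ⟨q, hq⟩ := hmeven
  have hqm : (m : ℝ) = q + q := by exact_mod_cast hq
  have hceil₁ : ⌈(1 / 2 : ℝ) * m⌉₊ = q := by
    rw [hqm, show (1 / 2 : ℝ) * (q + q) = q by ring, Nat.ceil_natCast]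
  have hεm : ε * m ≤ 1 := (le_div_iff₀ hm0).1 hε.2
  have hεm0 : 0 < ε * m := mul_pos hε.1 hm0
  have hceil₂ : ⌈(1 / 2 + ε) * m⌉₊ = q + 1 := by
    rw [Nat.ceil_eq_iff (by omega)]
    push_cast
    constructor <;> nlinarith
  let G : Fin m → Finset (Fin S.n) := fun j => univ.filter fun i => S.grp i = j
  have hG : ∀ j, (G j).Nonempty := fun j => by
    obtain ⟨i, hi⟩ := S.surj j
    exact ⟨i, by simp [G, hi]⟩
  have hGpos : ∀ j, (0 : ℝ) < #(G j) := fun j => by exact_mod_cast (hG j).card_pos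
  let r : Fin m → ℝ := fun j =>
    kthLeftmost ((G j).val.map x) ⌈(1 / 2 : ℝ) * #(G j)⌉₊
  let R : Multiset ℝ := univ.val.map r
  have hR : R.card = m := by simp [R]
  have hrep : repsMS (Mmech (1 / 2) (1 / 2) (1 / 2 + ε)) S x = R := by
    refine Multiset.map_congr rfl fun j _ => ?_
    simp only [Mmech, groupMS, Multiset.card_map]
    rfl
  set w := outcome (Mmech (1 / 2) (1 / 2) (1 / 2 + ε)) S x with hwdef
  have hw₁ : w 0 = kthLeftmost R q := by
    rw [hwdef, outcome, hrep, ← hceil₁]; rfl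
  have hw₂ : w 1 = kthLeftmost R (q + 1) := by
    rw [hwdef, outcome, hrep, ← hceil₂]; rfl
  have hw : w 0 ≤ w 1 := by
    rw [hw₁, hw₂]; exact kthLeftmost_mono (by omega) (by omega) (by omega)
  have hl : Fintype.card (Fin m) ≤ 2 * #{j | r j ≤ w 0} := by
    have := le_countP_le_kthLeftmost (S := R) (t := q) (by omega) (by omega)
    rw [← hw₁, countP_map_val] at this
    rw [Fintype.card_fin]; omega
  have hr : Fintype.card (Fin m) ≤ 2 * #{j | w 1 ≤ r j} := by
    have := card_lt_countP_kthLeftmost_le_add (S := R) (t := q + 1) (by omega) (by omega)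
    rw [← hw₂, countP_map_val] at this
    rw [Fintype.card_fin]; omega
  let avg : ℝ → Fin m → ℝ := fun z j => (1 / (#(G j) : ℝ)) * ∑ i ∈ G j, |x i - z|
  let c := (y 0 + y 1) / 2
  have main : ∑ j, (avg ((w 0 + w 1) / 2) j + (w 1 - w 0) / 2) ≤ 4 * ∑ j, avg c j := by
    refine sum_add_le_four_mul_sum (r := r) (c := c) hw (fun j => ?_) (fun j => ?_)
      (fun j h h' => ?_) (fun j h h' => ?_) hl hr
    · have := abs_median_sub_mul_card_le (median_counts (hG j) x).1
        (median_counts (hG j) x).2 c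
      rw [← le_div_iff₀ (hGpos j)] at this
      exact this.trans_eq (by simp only [avg]; ring)
    · have : ∑ i ∈ G j, |x i - (w 0 + w 1) / 2|
          ≤ ∑ i ∈ G j, |x i - c| + #(G j) * |(w 0 + w 1) / 2 - c| := by
        rw [← nsmul_eq_mul, ← sum_const, ← sum_add_distrib]
        refine sum_le_sum fun i _ => ?_
        rw [abs_sub_comm ((w 0 + w 1) / 2) c]
        exact abs_sub_le _ _ _
      calc avg ((w 0 + w 1) / 2) j
          ≤ (1 / (#(G j) : ℝ))
            * (∑ i ∈ G j, |x i - c| + #(G j) * |(w 0 + w 1) / 2 - c|) :=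
            mul_le_mul_of_nonneg_left this (by positivity)
        _ = _ := by
            have := (hGpos j).ne'
            simp only [avg]
            field_simp
    · exact mul_le_mul_of_nonneg_left
        (sum_abs_sub_le_of_le (median_counts (hG j) x).2 h h') (by positivity)
    · exact mul_le_mul_of_nonneg_left
        (sum_abs_sub_le_of_ge (median_counts (hG j) x).1 h h') (by positivity)
  have hupper : SC (maxCost 2) S x w
      ≤ (1 / (m : ℝ)) * ∑ j, (avg ((w 0 + w 1) / 2) j + (w 1 - w 0) / 2) := by
    refine mul_le_mul_of_nonneg_left (sum_le_sum fun j _ => ?_) (by positivity)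
    calc _ ≤ (1 / (#(G j) : ℝ))
            * ∑ i ∈ G j, (|x i - (w 0 + w 1) / 2| + (w 1 - w 0) / 2) :=
          mul_le_mul_of_nonneg_left
            (sum_le_sum fun i _ => maxCost_le_abs_sub_midpoint_add (x i) hw) (by positivity)
      _ = _ := by
          have := (hGpos j).ne'
          rw [sum_add_distrib, sum_const, nsmul_eq_mul, mul_add, ← mul_assoc,
            one_div_mul_cancel this, one_mul]
  have hlower : (1 / (m : ℝ)) * ∑ j, avg c j ≤ SC (maxCost 2) S x y :=
    mul_le_mul_of_nonneg_left
      (sum_le_sum fun j _ => mul_le_mul_of_nonneg_left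
        (sum_le_sum fun i _ => abs_sub_midpoint_le_maxCost (x i) y) (by positivity))
      (by positivity)
  calc SC (maxCost 2) S x w
      ≤ (1 / (m : ℝ)) * (4 * ∑ j, avg c j) :=
        hupper.trans (mul_le_mul_of_nonneg_left main (by positivity))
    _ = 4 * ((1 / (m : ℝ)) * ∑ j, avg c j) := by ring
    _ ≤ _ := mul_le_mul_of_nonneg_left hlower (by norm_num)

end
end

section
/- Consider the max-variant with k = 2 facilities and a strategyproof two-phase mechanism. For real numbers a < b and positive integers x and y, let g_{a,b}(x,y) denote the multiset of positions with x copies of a and y copies of b. Then: (1) if the mechanism's representative function chooses a on g_{a,b}(x,y), it must choose a′ on g_{a′,b}(x,y) for every a′ ∈ [a,b), and a on g_{a,b′}(x,y) for every b′ ∈ (a,b]; (2) if it chooses b on g_{a,b}(x,y), it must choose b′ on g_{a,b′}(x,y) for every b′ ∈ (a,b], and b on g_{a′,b}(x,y) for every a′ ∈ [a,b). -/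
open Finset

noncomputable section

/-- Agents of a set `T` sharing the true position `p` cannot gain by all reporting another common
position. -/
lemma Strategyproof.cost_le_of_common_deviation {k m : ℕ} {cost : ℝ → (Fin k → ℝ) → ℝ}
    {M : TwoPhase k} (hSP : Strategyproof cost M) (S : FLSetting k m) (p p' : ℝ)
    (T : Finset (Fin S.n)) (z : Fin S.n → ℝ) (hz : ∀ i ∈ T, z i = p) :
    cost p (outcome M S z) ≤ cost p (outcome M S fun i => if i ∈ T then p' else z i) := by
  induction T using Finset.induction_on with
  | empty => simp
  | insert j T hj ih =>
    refine (ih fun i hi => hz i (Finset.mem_insert_of_mem hi)).trans ?_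
    have h := hSP m S (fun i => if i ∈ T then p' else z i) j p'
    simp only [hj, if_false, hz j (Finset.mem_insert_self j T)] at h
    refine h.trans_eq ?_
    congr 2
    funext i
    by_cases hij : i = j <;> simp [hij]

/-- The setting with `m` groups of `N` agents each. -/
def uniformSetting {k m : ℕ} (N : ℕ) (hN : 0 < N) (hm : 2 ≤ m) (hmk : k ≤ m) :
    FLSetting k m where
  n := m * N
  hn := hm.trans (Nat.le_mul_of_pos_right m hN)
  hmk := hmk
  grp i := (finProdFinEquiv.symm i).1
  surj j := ⟨finProdFinEquiv (j, ⟨0, hN⟩), by simp⟩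

/-- The profile in which every group of `uniformSetting` has the positions `w`. -/
def uniformProfile (m : ℕ) {N : ℕ} (w : Fin N → ℝ) : Fin (m * N) → ℝ :=
  fun i => w (finProdFinEquiv.symm i).2

lemma groupMS_uniform {k m N : ℕ} (hN : 0 < N) (hm : 2 ≤ m) (hmk : k ≤ m) (w : Fin N → ℝ)
    (j : Fin m) :
    groupMS (uniformSetting N hN hm hmk) (uniformProfile m w) j = Finset.univ.val.map w := by
  have h : (Finset.univ.filter fun i : Fin (m * N) => (finProdFinEquiv.symm i).1 = j) =
      Finset.univ.map ⟨fun t : Fin N => finProdFinEquiv (j, t), fun s t hst => by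
        simpa using hst⟩ := by
    ext i
    obtain ⟨⟨g, t⟩, rfl⟩ := finProdFinEquiv.surjective i
    rw [Finset.mem_filter, Finset.mem_map, Equiv.symm_apply_apply]
    refine ⟨fun h => ⟨t, Finset.mem_univ t, congrArg (fun g => finProdFinEquiv (g, t)) h.2.symm⟩,
      fun ⟨s, _, h⟩ => ⟨Finset.mem_univ _, ?_⟩⟩
    exact (congrArg Prod.fst (finProdFinEquiv.injective h)).symm
  change (Finset.univ.filter fun i : Fin (m * N) => (finProdFinEquiv.symm i).1 = j).val.map
    (uniformProfile m w) = _
  rw [h, Finset.map_val, Multiset.map_map]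
  refine Multiset.map_congr rfl fun t _ => ?_
  change w (finProdFinEquiv.symm (finProdFinEquiv (j, t))).2 = w t
  rw [Equiv.symm_apply_apply]

lemma TwoPhase.Valid.outcome_uniform {k m N : ℕ} {M : TwoPhase k} (hV : M.Valid) (hN : 0 < N)
    (hm : 2 ≤ m) (hmk : k ≤ m) (w : Fin N → ℝ) (l : Fin k) :
    outcome M (uniformSetting N hN hm hmk) (uniformProfile m w) l =
      M.rep m (Finset.univ.val.map w) := by
  have hR : repsMS M (uniformSetting N hN hm hmk) (uniformProfile m w) =
      Multiset.replicate m (M.rep m (Finset.univ.val.map w)) := by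
    simp [repsMS, groupMS_uniform]
  have hle := hV.2 m (Multiset.replicate m (M.rep m (Finset.univ.val.map w))) (by simp) hmk
  change M.sel m (repsMS M (uniformSetting N hN hm hmk) (uniformProfile m w)) l = _
  rw [hR]
  exact Multiset.eq_of_mem_replicate (Multiset.mem_of_le hle (by simp))

/-- Agents of a group located at `p` do not prefer the representative obtained when all of them
report another common position. -/
lemma abs_sub_rep_le {M : TwoPhase 2} (hV : M.Valid) (hSP : Strategyproof (maxCost 2) M)
    {m : ℕ} (hm : 2 ≤ m) {x : ℕ} (hx : 0 < x) (y : ℕ) (p p' q : ℝ) :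
    |p - M.rep m (Multiset.replicate x p + Multiset.replicate y q)| ≤
      |p - M.rep m (Multiset.replicate x p' + Multiset.replicate y q)| := by
  have hN : 0 < x + y := by omega
  have hw (r : ℝ) : Finset.univ.val.map (Fin.append (fun _ : Fin x => r) fun _ : Fin y => q) =
      Multiset.replicate x r + Multiset.replicate y q := by
    rw [Fin.univ_val_map, List.ofFn_fin_append, List.ofFn_const, List.ofFn_const]
    rfl
  have hcost (r : ℝ) : maxCost 2 p (outcome M (uniformSetting (x + y) hN hm hm)
      (uniformProfile m (Fin.append (fun _ : Fin x => r) fun _ : Fin y => q))) =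
      |p - M.rep m (Multiset.replicate x r + Multiset.replicate y q)| := by
    simp only [maxCost, hV.outcome_uniform, hw, ciSup_const]
  rw [← hcost p, ← hcost p']
  let T : Finset (Fin (uniformSetting (k := 2) (x + y) hN hm hm).n) :=
    Finset.univ.filter fun i : Fin (m * (x + y)) => ((finProdFinEquiv.symm i).2 : ℕ) < x
  have h := hSP.cost_le_of_common_deviation (uniformSetting (x + y) hN hm hm) p p' T
    (uniformProfile m (Fin.append (fun _ : Fin x => p) fun _ : Fin y => q)) (by
      intro i hi
      have hlt : ((finProdFinEquiv.symm i).2 : ℕ) < x := (Finset.mem_filter.mp hi).2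
      simp only [uniformProfile]
      generalize (finProdFinEquiv.symm i).2 = t at hlt
      induction t using Fin.addCases <;> simp_all)
  refine h.trans_eq ?_
  congr 2
  funext i
  have hT : i ∈ T ↔ ((finProdFinEquiv.symm i).2 : ℕ) < x := by
    exact Finset.mem_filter.trans (and_iff_right (Finset.mem_univ _))
  rw [ite_eq_iff', hT]
  simp only [uniformProfile]
  generalize (finProdFinEquiv.symm i).2 = t
  induction t using Fin.addCases <;> simp

lemma TwoPhase.Valid.rep_eq_or_eq {k : ℕ} {M : TwoPhase k} (hV : M.Valid) (m : ℕ) {x : ℕ}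
    (hx : 0 < x) (y : ℕ) (p q : ℝ) :
    M.rep m (Multiset.replicate x p + Multiset.replicate y q) = p ∨
      M.rep m (Multiset.replicate x p + Multiset.replicate y q) = q := by
  have hne : Multiset.replicate x p + Multiset.replicate y q ≠ 0 := fun h => by
    have := congrArg Multiset.card h
    simp at this
    omega
  rcases Multiset.mem_add.mp (hV.1 m _ hne) with h | h
  · exact Or.inl (Multiset.eq_of_mem_replicate h)
  · exact Or.inr (Multiset.eq_of_mem_replicate h)

/-- If the position `p` is chosen, it follows its agents as they move to a point closer to `p`
than to `q`. -/
lemma rep_eq_of_closer {M : TwoPhase 2} (hV : M.Valid) (hSP : Strategyproof (maxCost 2) M)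
    {m : ℕ} (hm : 2 ≤ m) {x : ℕ} (hx : 0 < x) (y : ℕ) {p p' q : ℝ}
    (hp : M.rep m (Multiset.replicate x p + Multiset.replicate y q) = p)
    (hlt : |p' - p| < |p' - q|) :
    M.rep m (Multiset.replicate x p' + Multiset.replicate y q) = p' := by
  refine (hV.rep_eq_or_eq m hx y p' q).resolve_right fun h => ?_
  have := abs_sub_rep_le hV hSP hm hx y p' p q
  rw [h, hp] at this
  exact this.not_gt hlt

/-- If the position `p` is chosen, it is still chosen after the agents at `q` move to a point
closer to `q` than `p` is. -/
lemma rep_eq_of_other_moves {M : TwoPhase 2} (hV : M.Valid)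
    (hSP : Strategyproof (maxCost 2) M) {m : ℕ} (hm : 2 ≤ m) {x : ℕ} (hx : 0 < x) {y : ℕ}
    (hy : 0 < y) {p q q' : ℝ}
    (hp : M.rep m (Multiset.replicate x p + Multiset.replicate y q) = p)
    (hlt : |q - q'| < |q - p|) :
    M.rep m (Multiset.replicate x p + Multiset.replicate y q') = p := by
  refine (hV.rep_eq_or_eq m hx y p q').resolve_right fun h => ?_
  have := abs_sub_rep_le hV hSP hm hy x q q' p
  rw [add_comm, hp, add_comm, h] at this
  exact this.not_gt hlt

/-- If the position `p` is chosen, it follows its agents along the segment towards `q`. -/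
lemma rep_eq_of_segment {M : TwoPhase 2} (hV : M.Valid) (hSP : Strategyproof (maxCost 2) M)
    {m : ℕ} (hm : 2 ≤ m) {x : ℕ} (hx : 0 < x) (y : ℕ) {p q : ℝ} (hpq : p ≠ q)
    (hp : M.rep m (Multiset.replicate x p + Multiset.replicate y q) = p)
    {c : ℝ} (hc : 0 < c) (hc1 : c ≤ 1) :
    M.rep m (Multiset.replicate x (q + c * (p - q)) + Multiset.replicate y q) =
      q + c * (p - q) := by
  obtain ⟨n, hn⟩ := exists_pow_lt_of_lt_one hc (show (2 / 3 : ℝ) < 1 by norm_num)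
  replace hn := hn.le
  clear hc
  induction n generalizing c with
  | zero =>
    obtain rfl : c = 1 := le_antisymm hc1 (by simpa using hn)
    simpa using hp
  | succ n ih =>
    rcases le_total ((2 / 3 : ℝ) ^ n) c with h | h
    · exact ih hc1 h
    · have hpos : 0 < (2 / 3 : ℝ) ^ n := by positivity
      rw [pow_succ] at hn
      refine rep_eq_of_closer hV hSP hm hx y
        (ih (pow_le_one₀ (by norm_num) (by norm_num)) le_rfl) ?_
      rw [show q + c * (p - q) - (q + (2 / 3) ^ n * (p - q)) = (c - (2 / 3) ^ n) * (p - q) by ring,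
        add_sub_cancel_left, abs_mul, abs_mul]
      refine mul_lt_mul_of_pos_right ?_ (abs_pos.mpr (sub_ne_zero.mpr hpq))
      rw [abs_of_nonpos (by linarith), abs_of_pos (by linarith)]
      linarith

/-- Continuity property of the representative function of a strategyproof mechanism in the
max-variant with two facilities, for the group `g_{a,b}(x,y)` with `x` agents at `a` and
`y` agents at `b`. -/
theorem stmt11 (M : TwoPhase 2) (hV : M.Valid) (hSP : Strategyproof (maxCost 2) M)
    (m : ℕ) (hm : 2 ≤ m) (a b : ℝ) (hab : a < b) (x y : ℕ) (hx : 0 < x) (hy : 0 < y) :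
    (M.rep m (Multiset.replicate x a + Multiset.replicate y b) = a →
      (∀ a' ∈ Set.Ico a b, M.rep m (Multiset.replicate x a' + Multiset.replicate y b) = a') ∧
      (∀ b' ∈ Set.Ioc a b, M.rep m (Multiset.replicate x a + Multiset.replicate y b') = a)) ∧
    (M.rep m (Multiset.replicate x a + Multiset.replicate y b) = b →
      (∀ b' ∈ Set.Ioc a b, M.rep m (Multiset.replicate x a + Multiset.replicate y b') = b') ∧
      (∀ a' ∈ Set.Ico a b, M.rep m (Multiset.replicate x a' + Multiset.replicate y b) = b)) := by
  constructor
  · intro h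
    refine ⟨fun a' ha' => ?_, fun b' hb' => ?_⟩
    · have hc := rep_eq_of_segment hV hSP hm hx y hab.ne h (c := (b - a') / (b - a))
        (div_pos (sub_pos.mpr ha'.2) (sub_pos.mpr hab))
        ((div_le_one (sub_pos.mpr hab)).mpr (by linarith [ha'.1]))
      rwa [show b + (b - a') / (b - a) * (a - b) = a' by
        have := (sub_pos.mpr hab).ne'
        field_simp
        ring] at hc
    · refine rep_eq_of_other_moves hV hSP hm hx hy h ?_
      rw [abs_of_nonneg (sub_nonneg.mpr hb'.2), abs_of_pos (sub_pos.mpr hab)]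
      linarith [hb'.1]
  · intro h
    rw [add_comm] at h
    refine ⟨fun b' hb' => ?_, fun a' ha' => ?_⟩
    · have hc := rep_eq_of_segment hV hSP hm hy x hab.ne' h (c := (b' - a) / (b - a))
        (div_pos (sub_pos.mpr hb'.1) (sub_pos.mpr hab))
        ((div_le_one (sub_pos.mpr hab)).mpr (by linarith [hb'.2]))
      rwa [div_mul_cancel₀ _ (sub_pos.mpr hab).ne', add_sub_cancel, add_comm] at hc
    · rw [add_comm]
      refine rep_eq_of_other_moves hV hSP hm hy hx h ?_
      rw [abs_of_nonpos (sub_nonpos.mpr ha'.1), abs_of_neg (sub_neg.mpr hab)]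
      linarith [ha'.2]

end
end

section
/- In the sum-variant, for every k ≥ 3 facilities, the mechanism M_k^sum has approximation ratio at most 3 + 2/k: on every instance with m ≥ k groups, its output has social cost at most (3 + 2/k) times the minimum social cost over all feasible solutions. -/
open Finset

noncomputable section

/-- The mechanism `M_k^sum`: each group's representative is the position of its
`⌈n_g/2⌉`-th leftmost agent, and for each `ℓ ∈ {1,…,k}` the `ℓ`-th facility is opened
at the `⌈ℓm/(k+1)⌉`-th leftmost representative location. -/
def MsumMech (k : ℕ) : TwoPhase k where
  rep := fun _ S => kthLeftmost S ((Multiset.card S + 1) / 2)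
  sel := fun m R ℓ => kthLeftmost R ⌈(((ℓ.val + 1) * m : ℕ) : ℝ) / ((k : ℝ) + 1)⌉₊

open MeasureTheory in
/-- The distance between two reals is the measure of the thresholds that separate them. -/
theorem integral_indicator_Ico_min_max (u v : ℝ) :
    ∫ t, (Set.Ico (min u v) (max u v)).indicator (fun _ => (1 : ℝ)) t = |u - v| := by
  rw [integral_indicator_const _ measurableSet_Ico]
  simp [measureReal_def, Real.volume_Ico, max_sub_min_eq_abs', abs_nonneg]

open MeasureTheory in
theorem integrable_indicator_Ico (a b : ℝ) :
    Integrable ((Set.Ico a b).indicator (fun _ => (1 : ℝ))) := by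
  rw [integrable_indicator_iff measurableSet_Ico]
  exact integrableOn_const (by simp)

/-- The indicator of `u ≤ t`. -/
def leInd (u t : ℝ) : ℝ := if u ≤ t then 1 else 0

/-- The sum-variant individual cost restricted to the threshold `t`: the number of facilities
separated from the agent by `t`. -/
def cutCost (k : ℕ) (t xi : ℝ) (y : Fin k → ℝ) : ℝ :=
  ∑ ℓ, (Set.Ico (min xi (y ℓ)) (max xi (y ℓ))).indicator (fun _ => (1 : ℝ)) t

theorem indicator_Ico_min_max_eq (u v t : ℝ) :
    (Set.Ico (min u v) (max u v)).indicator (fun _ => (1 : ℝ)) t =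
      leInd u t * (1 - leInd v t) + (1 - leInd u t) * leInd v t := by
  unfold leInd
  by_cases hu : u ≤ t <;> by_cases hv : v ≤ t <;> simp [Set.indicator, hu, hv]

theorem cutCost_eq (k : ℕ) (t xi : ℝ) (y : Fin k → ℝ) :
    cutCost k t xi y =
      leInd xi t * (k - ∑ ℓ, leInd (y ℓ) t) + (1 - leInd xi t) * ∑ ℓ, leInd (y ℓ) t := by
  simp only [cutCost, indicator_Ico_min_max_eq, sum_add_distrib, ← mul_sum, sum_sub_distrib]
  simp

open MeasureTheory in
theorem integrable_SC_cutCost {k m : ℕ} (S : FLSetting k m) (x : Fin S.n → ℝ) (y : Fin k → ℝ) :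
    Integrable fun t => SC (cutCost k t) S x y := by
  unfold SC cutCost
  refine Integrable.const_mul (integrable_finsetSum _ fun j _ => Integrable.const_mul
    (integrable_finsetSum _ fun i _ => integrable_finsetSum _ fun ℓ _ => ?_) _) _
  exact integrable_indicator_Ico _ _

open MeasureTheory in
theorem integral_SC_cutCost {k m : ℕ} (S : FLSetting k m) (x : Fin S.n → ℝ) (y : Fin k → ℝ) :
    ∫ t, SC (cutCost k t) S x y = SC (sumCost k) S x y := by
  have hint : ∀ (i : Fin S.n) (ℓ : Fin k), Integrable fun t =>
      (Set.Ico (min (x i) (y ℓ)) (max (x i) (y ℓ))).indicator (fun _ => (1 : ℝ)) t :=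
    fun i ℓ => integrable_indicator_Ico _ _
  unfold SC cutCost sumCost
  rw [integral_const_mul, integral_finsetSum]
  · congr 1
    refine sum_congr rfl fun j _ => ?_
    rw [integral_const_mul, integral_finsetSum]
    · congr 1
      refine sum_congr rfl fun i _ => ?_
      rw [integral_finsetSum _ fun ℓ _ => hint i ℓ]
      exact sum_congr rfl fun ℓ _ => integral_indicator_Ico_min_max _ _
    · exact fun i _ => integrable_finsetSum _ fun ℓ _ => hint i ℓ
  · exact fun j _ => Integrable.const_mul
      (integrable_finsetSum _ fun i _ => integrable_finsetSum _ fun ℓ _ => hint i ℓ) _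

theorem List.getD_le_iff_lt_countP {l : List ℝ} (hl : l.Pairwise (· ≤ ·)) (t : ℝ) {i : ℕ}
    (hi : i < l.length) : l.getD i 0 ≤ t ↔ i < l.countP (· ≤ t) := by
  induction l generalizing i with
  | nil => simp at hi
  | cons a l ih =>
    rw [List.pairwise_cons] at hl
    by_cases ha : a ≤ t
    · cases i with
      | zero => simp [ha]
      | succ i =>
        simp only [List.length_cons, Nat.add_lt_add_iff_right] at hi
        simpa [ha] using ih hl.2 hi
    · have h0 : l.countP (· ≤ t) = 0 := by
        rw [List.countP_eq_zero]
        intro b hb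
        have := hl.1 b hb
        simp only [decide_eq_true_eq, not_le]
        linarith
      cases i with
      | zero => simp [ha, h0]
      | succ i =>
        simp only [List.length_cons, Nat.add_lt_add_iff_right] at hi
        simpa [ha, h0] using (ih hl.2 hi)

theorem kthLeftmost_le_iff (R : Multiset ℝ) (t : ℝ) {j : ℕ} (hj : 1 ≤ j)
    (hjR : j ≤ Multiset.card R) : kthLeftmost R j ≤ t ↔ j ≤ R.countP (· ≤ t) := by
  have hlen : j - 1 < (R.sort (· ≤ ·)).length := by
    rw [Multiset.length_sort]; omega
  have hc : R.countP (· ≤ t) = (R.sort (· ≤ ·)).countP (· ≤ t) := by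
    conv_lhs => rw [← Multiset.sort_eq R (· ≤ ·)]
    exact Multiset.coe_countP _ _
  rw [kthLeftmost, List.getD_le_iff_lt_countP (Multiset.pairwise_sort R (· ≤ ·)) t hlen, hc]
  omega

theorem countP_map_val_eq_sum_leInd {ι : Type*} (s : Finset ι) (f : ι → ℝ) (t : ℝ) :
    ((s.val.map f).countP (· ≤ t) : ℝ) = ∑ i ∈ s, leInd (f i) t := by
  rw [Multiset.countP_map]
  simp only [leInd, sum_boole]
  rfl

theorem leInd_nonneg (u t : ℝ) : 0 ≤ leInd u t := by
  unfold leInd; split_ifs <;> norm_num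

theorem leInd_le_one (u t : ℝ) : leInd u t ≤ 1 := by
  unfold leInd; split_ifs <;> norm_num

/-- The fraction of agents of group `j` lying weakly to the left of `t`. -/
def groupFrac {k m : ℕ} (S : FLSetting k m) (x : Fin S.n → ℝ) (t : ℝ) (j : Fin m) : ℝ :=
  (1 / (groupSize S j : ℝ)) * ∑ i ∈ Finset.univ.filter (fun i => S.grp i = j), leInd (x i) t

theorem groupSize_pos {k m : ℕ} (S : FLSetting k m) (j : Fin m) : 0 < groupSize S j := by
  obtain ⟨i, hi⟩ := S.surj j
  exact card_pos.2 ⟨i, by simp [hi]⟩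

theorem SC_cutCost_eq {k m : ℕ} (hm : 0 < m) (S : FLSetting k m) (x : Fin S.n → ℝ)
    (y : Fin k → ℝ) (t : ℝ) :
    SC (cutCost k t) S x y =
      ((1 / (m : ℝ)) * ∑ j, groupFrac S x t j) * (k - ∑ ℓ, leInd (y ℓ) t) +
      (1 - (1 / (m : ℝ)) * ∑ j, groupFrac S x t j) * ∑ ℓ, leInd (y ℓ) t := by
  have hm' : (m : ℝ) ≠ 0 := by positivity
  have key : ∀ j, (1 / (groupSize S j : ℝ)) *
      ∑ i ∈ Finset.univ.filter (fun i => S.grp i = j), cutCost k t (x i) y =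
      groupFrac S x t j * (k - ∑ ℓ, leInd (y ℓ) t) +
        (1 - groupFrac S x t j) * ∑ ℓ, leInd (y ℓ) t := by
    intro j
    have hg : (groupSize S j : ℝ) ≠ 0 := by exact_mod_cast (groupSize_pos S j).ne'
    simp only [cutCost_eq, sum_add_distrib, ← sum_mul, sum_sub_distrib, groupFrac]
    rw [sum_const, nsmul_one]
    change _ * (_ + ((groupSize S j : ℝ) - _) * _) = _
    field_simp
  unfold SC
  simp only [key, sum_add_distrib, ← sum_mul, sum_sub_distrib]
  simp only [sum_const, card_univ, Fintype.card_fin, nsmul_one]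
  field_simp

theorem card_groupMS {k m : ℕ} (S : FLSetting k m) (x : Fin S.n → ℝ) (j : Fin m) :
    Multiset.card (groupMS S x j) = groupSize S j :=
  Multiset.card_map _ _

theorem rep_le_iff {k m : ℕ} (S : FLSetting k m) (x : Fin S.n → ℝ) (t : ℝ) (j : Fin m) :
    (MsumMech k).rep m (groupMS S x j) ≤ t ↔
      (groupSize S j + 1) / 2 ≤ (groupMS S x j).countP (· ≤ t) := by
  have := groupSize_pos S j
  simp only [MsumMech]
  rw [kthLeftmost_le_iff _ _ (by rw [card_groupMS]; omega) (by rw [card_groupMS]; omega),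
    card_groupMS]

theorem groupFrac_bounds {k m : ℕ} (S : FLSetting k m) (x : Fin S.n → ℝ) (t : ℝ) (j : Fin m) :
    leInd ((MsumMech k).rep m (groupMS S x j)) t ≤ 2 * groupFrac S x t j ∧
      2 * groupFrac S x t j ≤ 1 + leInd ((MsumMech k).rep m (groupMS S x j)) t := by
  have hpos : (0 : ℝ) < groupSize S j := by exact_mod_cast groupSize_pos S j
  have hcard : (groupMS S x j).countP (· ≤ t) ≤ groupSize S j :=
    (Multiset.countP_le_card _ _).trans_eq (card_groupMS S x j)
  have hfrac : groupFrac S x t j =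
      ((groupMS S x j).countP (· ≤ t) : ℝ) / groupSize S j := by
    rw [groupFrac, groupMS, countP_map_val_eq_sum_leInd]; ring
  rw [hfrac, leInd, mul_div_assoc', le_div_iff₀ hpos, div_le_iff₀ hpos]
  have hrep := rep_le_iff S x t j
  split_ifs with h
  · have h' : groupSize S j ≤ 2 * (groupMS S x j).countP (· ≤ t) := by
      have := hrep.1 h; omega
    have h1 : (groupSize S j : ℝ) ≤ 2 * (groupMS S x j).countP (· ≤ t) := by exact_mod_cast h'
    have h2 : ((groupMS S x j).countP (· ≤ t) : ℝ) ≤ groupSize S j := by exact_mod_cast hcard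
    constructor <;> linarith
  · have h' : 2 * (groupMS S x j).countP (· ≤ t) ≤ groupSize S j := by
      have := mt hrep.2 h; omega
    have h1 : 2 * ((groupMS S x j).countP (· ≤ t) : ℝ) ≤ groupSize S j := by exact_mod_cast h'
    constructor
    · rw [zero_mul]; positivity
    · linarith

theorem card_filter_succ_mul_le (k m X : ℕ) :
    (Finset.univ.filter fun ℓ : Fin k => (ℓ.val + 1) * m ≤ X).card * m ≤ X := by
  rcases Nat.eq_zero_or_pos m with rfl | hm
  · simp
  rw [← Nat.le_div_iff_mul_le hm, ← Finset.card_range (X / m)]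
  refine card_le_card_of_injOn Fin.val (fun ℓ hℓ => ?_) Fin.val_injective.injOn
  simp only [coe_filter, mem_univ, true_and, Set.mem_ofPred_eq] at hℓ
  simpa using (Nat.le_div_iff_mul_le hm).2 hℓ

theorem outcome_le_iff {k m : ℕ} (hm : 0 < m) (S : FLSetting k m) (x : Fin S.n → ℝ) (t : ℝ)
    (ℓ : Fin k) : outcome (MsumMech k) S x ℓ ≤ t ↔
      (ℓ.val + 1) * m ≤ (repsMS (MsumMech k) S x).countP (· ≤ t) * (k + 1) := by
  have hk : (0 : ℝ) < (k : ℝ) + 1 := by positivity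
  have hc : Multiset.card (repsMS (MsumMech k) S x) = m := by simp [repsMS]
  change kthLeftmost _ _ ≤ t ↔ _
  rw [kthLeftmost_le_iff, Nat.ceil_le, div_le_iff₀ hk]
  · exact_mod_cast Iff.rfl
  · rw [Nat.one_le_ceil_iff]
    have : 0 < (ℓ.val + 1) * m := by positivity
    positivity
  · rw [hc, Nat.ceil_le, div_le_iff₀ hk]
    have : (ℓ.val + 1) * m ≤ m * (k + 1) := by
      rw [mul_comm]; exact Nat.mul_le_mul_left _ (by omega)
    exact_mod_cast this

theorem sum_leInd_outcome_le {k m : ℕ} (hm : 0 < m) (S : FLSetting k m) (x : Fin S.n → ℝ)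
    (t : ℝ) : (∑ ℓ, leInd (outcome (MsumMech k) S x ℓ) t) * m ≤
      (repsMS (MsumMech k) S x).countP (· ≤ t) * (k + 1) := by
  simp only [leInd, sum_boole, outcome_le_iff hm]
  exact_mod_cast card_filter_succ_mul_le k m _

theorem sub_sum_leInd_outcome_le {k m : ℕ} (hm : 0 < m) (S : FLSetting k m) (x : Fin S.n → ℝ)
    (t : ℝ) : (k - ∑ ℓ, leInd (outcome (MsumMech k) S x ℓ) t) * m ≤
      (m - (repsMS (MsumMech k) S x).countP (· ≤ t)) * (k + 1) := by
  set P := (repsMS (MsumMech k) S x).countP (· ≤ t)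
  have hPm : P ≤ m := (Multiset.countP_le_card _ _).trans_eq (by simp [repsMS])
  have hsum : (k : ℝ) - ∑ ℓ, leInd (outcome (MsumMech k) S x ℓ) t =
      (Finset.univ.filter fun ℓ : Fin k => ¬ (ℓ.val + 1) * m ≤ P * (k + 1)).card := by
    simp only [leInd, sum_boole, outcome_le_iff hm]
    rw [sub_eq_iff_eq_add', ← Nat.cast_add, card_filter_add_card_filter_not]
    simp
  have hle : (Finset.univ.filter fun ℓ : Fin k => ¬ (ℓ.val + 1) * m ≤ P * (k + 1)).card ≤
      (Finset.univ.filter fun ℓ : Fin k => (ℓ.val + 1) * m ≤ (m - P) * (k + 1)).card := by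
    refine card_le_card_of_injOn Fin.rev (fun ℓ hℓ => ?_) Fin.rev_injective.injOn
    simp only [coe_filter, mem_univ, true_and, Set.mem_ofPred_eq, not_le, Fin.val_rev] at hℓ ⊢
    obtain ⟨d, hd⟩ := Nat.exists_eq_add_of_lt ℓ.isLt
    obtain ⟨e, he⟩ := Nat.exists_eq_add_of_le hPm
    have h1 : k - (ℓ.val + 1) + 1 = d + 1 := by omega
    have h3 : m - P = e := by omega
    rw [h1, h3]
    have h2 : k + 1 = (ℓ.val + 1) + (d + 1) := by omega
    rw [h2] at hℓ ⊢
    clear_value P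
    subst he
    nlinarith
  have := (Nat.mul_le_mul_right m hle).trans (card_filter_succ_mul_le k m _)
  rw [hsum, ← Nat.cast_sub hPm]
  exact_mod_cast this

/-- The comparison of the mechanism with an arbitrary solution at one threshold: `a` is the
average fraction of agents on the left, `p` the fraction of representatives on the left, and
`q`, `r` the numbers of facilities on the left. -/
theorem cut_inequality {k a p q r : ℝ} (hk : 0 < k) (hp0 : 0 ≤ p)
    (hpa : p ≤ 2 * a) (hap : 2 * a ≤ 1 + p) (hq : q ≤ p * (k + 1))
    (hq' : k - q ≤ (1 - p) * (k + 1)) (hr0 : 0 ≤ r) (hrk : r ≤ k) :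
    a * (k - q) + (1 - a) * q ≤ (3 + 2 / k) * (a * (k - r) + (1 - a) * r) := by
  have hratio : (3 + 2 / k) * k = 3 * k + 2 := by field_simp
  have hc : 0 ≤ 3 + 2 / k := by positivity
  rcases le_total a (1 / 2) with h | h
  · have h1 : a * k ≤ a * (k - r) + (1 - a) * r := by nlinarith
    have h2 : q * (1 - 2 * a) ≤ 2 * a * (k + 1) := by
      have : q * (1 - 2 * a) ≤ (2 * a * (k + 1)) * (1 - 2 * a) :=
        mul_le_mul_of_nonneg_right (by nlinarith) (by linarith)
      nlinarith [mul_nonneg (sq_nonneg a) (by linarith : 0 ≤ k + 1)]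
    have h3 := mul_le_mul_of_nonneg_left h1 hc
    nlinarith
  · have h1 : (1 - a) * k ≤ a * (k - r) + (1 - a) * r := by nlinarith
    have h2 : (k - q) * (2 * a - 1) ≤ 2 * (1 - a) * (k + 1) := by
      have : (k - q) * (2 * a - 1) ≤ (2 * (1 - a) * (k + 1)) * (2 * a - 1) :=
        mul_le_mul_of_nonneg_right (by nlinarith) (by linarith)
      nlinarith [mul_nonneg (sq_nonneg (1 - a)) (by linarith : 0 ≤ k + 1)]
    have h3 := mul_le_mul_of_nonneg_left h1 hc
    nlinarith

theorem SC_cutCost_outcome_le {k m : ℕ} (hk : 0 < k) (S : FLSetting k m) (x : Fin S.n → ℝ)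
    (y : Fin k → ℝ) (t : ℝ) :
    SC (cutCost k t) S x (outcome (MsumMech k) S x) ≤
      (3 + 2 / (k : ℝ)) * SC (cutCost k t) S x y := by
  have hm : 0 < m := hk.trans_le S.hmk
  have hm' : (0 : ℝ) < m := by exact_mod_cast hm
  set P := (repsMS (MsumMech k) S x).countP (· ≤ t) with hP
  have hPsum : (P : ℝ) = ∑ j, leInd ((MsumMech k).rep m (groupMS S x j)) t := by
    rw [hP, repsMS, countP_map_val_eq_sum_leInd]
  have hlow : (P : ℝ) ≤ 2 * ∑ j, groupFrac S x t j := by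
    rw [hPsum, mul_sum]
    exact sum_le_sum fun j _ => (groupFrac_bounds S x t j).1
  have hupp : 2 * ∑ j, groupFrac S x t j ≤ m + P := by
    rw [hPsum, mul_sum]
    refine (sum_le_sum fun j _ => (groupFrac_bounds S x t j).2).trans_eq ?_
    simp [sum_add_distrib]
  rw [SC_cutCost_eq hm, SC_cutCost_eq hm]
  refine cut_inequality (p := P / m) (by exact_mod_cast hk) (by positivity)
    ?_ ?_ ?_ ?_ (sum_nonneg fun ℓ _ => leInd_nonneg _ _) ?_
  · rw [div_le_iff₀ hm']; field_simp; exact hlow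
  · field_simp; exact hupp
  · rw [div_mul_eq_mul_div, le_div_iff₀ hm']
    exact sum_leInd_outcome_le hm S x t
  · rw [one_sub_div hm'.ne', div_mul_eq_mul_div, le_div_iff₀ hm']
    exact sub_sum_leInd_outcome_le hm S x t
  · refine (sum_le_sum fun ℓ _ => leInd_le_one _ _).trans_eq ?_
    simp

/-- In the sum-variant, for every `k ≥ 3`, the mechanism `M_k^sum` has approximation
ratio at most `3 + 2/k` on every instance with `m ≥ k` groups. -/
theorem stmt15 (k : ℕ) (hk : 3 ≤ k) (m : ℕ)
    (S : FLSetting k m) (x : Fin S.n → ℝ) (y : Fin k → ℝ) (hy : Feasible S x y) :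
    SC (sumCost k) S x (outcome (MsumMech k) S x)
      ≤ (3 + 2 / (k : ℝ)) * SC (sumCost k) S x y := by
  rw [← integral_SC_cutCost, ← integral_SC_cutCost, ← MeasureTheory.integral_const_mul]
  exact MeasureTheory.integral_mono (integrable_SC_cutCost S x _)
    ((integrable_SC_cutCost S x y).const_mul _)
    fun t => SC_cutCost_outcome_le (by omega) S x y t

end
end

section
/- In the sum-variant, for every k ≥ 3 facilities, every two-phase mechanism (not necessarily strategyproof) has approximation ratio at least 3 − 2/k: there exists an instance (with m = k groups of two agents each) on which the social cost of the mechanism's output is at least (3 − 2/k) times the minimum social cost over all feasible solutions. -/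
open Finset

noncomputable section

/-- `k` groups of two agents each: agent `(j, b)` belongs to group `j`. -/
def pairSetting (k : ℕ) (hk : 0 < k) : FLSetting k k where
  n := k * 2
  hn := by omega
  hmk := le_rfl
  grp i := (finProdFinEquiv.symm i).1
  surj j := ⟨finProdFinEquiv (j, 0), by simp⟩

/-- The agents of `pairSetting`, labelled by their group and their place in it. -/
def pairAgent (k : ℕ) (hk : 0 < k) : Fin k × Fin 2 ≃ Fin (pairSetting k hk).n :=
  finProdFinEquiv

/-- The position profile of `pairSetting` in which agent `(j, b)` is located at `p j b`. -/
def pairProfile {k : ℕ} (hk : 0 < k) (p : Fin k → Fin 2 → ℝ) : Fin (pairSetting k hk).n → ℝ :=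
  fun i => p ((pairAgent k hk).symm i).1 ((pairAgent k hk).symm i).2

lemma grp_pairAgent {k : ℕ} (hk : 0 < k) (a : Fin k × Fin 2) :
    (pairSetting k hk).grp (pairAgent k hk a) = a.1 :=
  congrArg Prod.fst (finProdFinEquiv.symm_apply_apply a)

lemma filter_grp_pairSetting {k : ℕ} (hk : 0 < k) (j : Fin k) :
    (Finset.univ.filter fun i => (pairSetting k hk).grp i = j) =
      (Finset.univ : Finset (Fin 2)).map
        ((Function.Embedding.sectR j (Fin 2)).trans (pairAgent k hk).toEmbedding) := by
  ext i
  obtain ⟨⟨a, b⟩, rfl⟩ := (pairAgent k hk).surjective i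
  simp [grp_pairAgent, eq_comm]

lemma groupSize_pairSetting {k : ℕ} (hk : 0 < k) (j : Fin k) :
    groupSize (pairSetting k hk) j = 2 := by
  rw [groupSize, filter_grp_pairSetting, Finset.card_map, Finset.card_univ, Fintype.card_fin]

lemma groupMS_pairProfile {k : ℕ} (hk : 0 < k) (p : Fin k → Fin 2 → ℝ) (j : Fin k) :
    groupMS (pairSetting k hk) (pairProfile hk p) j = {p j 0, p j 1} := by
  rw [groupMS, filter_grp_pairSetting, Finset.map_val, Multiset.map_map]
  simp [pairProfile, Fin.univ_succ]

lemma SC_pairProfile {k : ℕ} (hk : 0 < k) (p : Fin k → Fin 2 → ℝ) (y : Fin k → ℝ) :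
    SC (sumCost k) (pairSetting k hk) (pairProfile hk p) y =
      1 / (2 * (k : ℝ)) * ∑ ℓ, ∑ j, (|p j 0 - y ℓ| + |p j 1 - y ℓ|) := by
  rw [Finset.sum_comm]
  simp only [SC, groupSize_pairSetting, filter_grp_pairSetting, Finset.sum_map, Fin.sum_univ_two,
    sumCost, pairProfile, Function.Embedding.trans_apply,
    Function.Embedding.sectR_apply, Equiv.coe_toEmbedding, Equiv.symm_apply_apply,
    Finset.sum_add_distrib, ← Finset.mul_sum]
  push_cast
  ring

/-- With as many groups as facilities, a valid mechanism opens a facility at every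
representative. -/
lemma sum_outcome {k : ℕ} {M : TwoPhase k} (hM : M.Valid) (S : FLSetting k k) (x : Fin S.n → ℝ)
    (F : ℝ → ℝ) :
    ∑ ℓ, F (outcome M S x ℓ) = ∑ j, F (M.rep k (groupMS S x j)) := by
  have hcard : Multiset.card (repsMS M S x) = k := by simp [repsMS]
  have heq : (↑(List.ofFn (outcome M S x)) : Multiset ℝ) = repsMS M S x :=
    Multiset.eq_of_le_of_card_le (hM.2 k _ hcard le_rfl) (by simp [hcard])
  have hsum := congrArg (fun R : Multiset ℝ => (R.map F).sum) heq
  simp only [Multiset.map_coe, List.map_ofFn, Multiset.sum_coe, List.sum_ofFn, repsMS,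
    Multiset.map_map] at hsum
  exact hsum

lemma exists_rep_pair_eq_left {k : ℕ} {M : TwoPhase k} (hM : M.Valid) (m : ℕ) :
    ∃ r c : ℝ, |r - c| = 1 ∧ M.rep m {r, c} = r := by
  have hmem := hM.1 m {0, 1} (by simp)
  simp only [Multiset.insert_eq_cons, Multiset.mem_cons, Multiset.mem_singleton] at hmem
  rcases hmem with h | h
  · exact ⟨0, 1, by norm_num, h⟩
  · exact ⟨1, 0, by norm_num, by rw [Multiset.pair_comm]; exact h⟩

/-- The agent `(g, 0)` sits at `r`, and all other agents sit at `c`. -/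
def outlierProfile {k : ℕ} (g : Fin k) (r c : ℝ) (j : Fin k) (b : Fin 2) : ℝ :=
  if j = g ∧ b = 0 then r else c

lemma sum_dist_outlierProfile {k : ℕ} (g : Fin k) (r c z : ℝ) :
    ∑ j, (|outlierProfile g r c j 0 - z| + |outlierProfile g r c j 1 - z|) =
      |r - z| + (2 * k - 1) * |c - z| := by
  have hterm : ∀ j, |outlierProfile g r c j 0 - z| + |outlierProfile g r c j 1 - z| =
      (if j = g then |r - z| - |c - z| else 0) + 2 * |c - z| := by
    intro j
    by_cases h : j = g
    · simp only [outlierProfile, h, and_self, if_true, one_ne_zero, and_false, if_false]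
      ring
    · simp only [outlierProfile, h, false_and, if_false]
      ring
  simp only [hterm, Finset.sum_add_distrib, Finset.sum_ite_eq', Finset.mem_univ, if_true,
    Finset.sum_const, Finset.card_univ, Fintype.card_fin, nsmul_eq_mul]
  ring

/-- The lower bound `3 - 2 / k`, attained on an instance whose minimum social cost is positive. -/
theorem exists_pair_instance_ratio (k : ℕ) (hk : 0 < k) (M : TwoPhase k) (hM : M.Valid) :
    ∃ (S : FLSetting k k) (x : Fin S.n → ℝ),
      (∀ j : Fin k, groupSize S j = 2) ∧
      ∃ yopt : Fin k → ℝ, Feasible S x yopt ∧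
        (∀ y : Fin k → ℝ, Feasible S x y → SC (sumCost k) S x yopt ≤ SC (sumCost k) S x y) ∧
        0 < SC (sumCost k) S x yopt ∧
        (3 - 2 / (k : ℝ)) * SC (sumCost k) S x yopt = SC (sumCost k) S x (outcome M S x) := by
  obtain ⟨r, c, hrc, hrep⟩ := exists_rep_pair_eq_left hM k
  let g : Fin k := ⟨0, hk⟩
  let p := outlierProfile g r c
  have hk1 : (1 : ℝ) ≤ k := by exact_mod_cast hk
  have hk0 : (k : ℝ) ≠ 0 := by positivity
  have hSC : ∀ y, SC (sumCost k) (pairSetting k hk) (pairProfile hk p) y =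
      1 / (2 * (k : ℝ)) * ∑ ℓ, (|r - y ℓ| + (2 * k - 1) * |c - y ℓ|) := by
    intro y
    simp only [SC_pairProfile, p, sum_dist_outlierProfile]
  have hopt : SC (sumCost k) (pairSetting k hk) (pairProfile hk p) (fun _ => c) = 1 / 2 := by
    simp only [hSC, hrc, sub_self, abs_zero, mul_zero, add_zero, Finset.sum_const,
      Finset.card_univ, Fintype.card_fin, nsmul_eq_mul]
    field_simp
  have hreps : ∀ j, M.rep k (groupMS (pairSetting k hk) (pairProfile hk p) j) =
      if j = g then r else c := by
    intro j
    rw [groupMS_pairProfile]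
    by_cases h : j = g
    · simpa [p, outlierProfile, h] using hrep
    · simpa [p, outlierProfile, h] using hM.1 k {c, c} (by simp)
  have hout : SC (sumCost k) (pairSetting k hk) (pairProfile hk p)
      (outcome M (pairSetting k hk) (pairProfile hk p)) = (3 - 2 / (k : ℝ)) * (1 / 2) := by
    have hterm : ∀ j : Fin k, |r - (if j = g then r else c)| +
        (2 * k - 1) * |c - (if j = g then r else c)| =
          (if j = g then 2 * (k : ℝ) - 2 else 0) + 1 := by
      intro j
      split_ifs
      · rw [abs_sub_comm c r, hrc, sub_self, abs_zero]
        ring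
      · rw [hrc, sub_self, abs_zero]
        ring
    rw [hSC, sum_outcome hM _ _ fun z => |r - z| + (2 * k - 1) * |c - z|]
    simp only [hreps, hterm, Finset.sum_add_distrib, Finset.sum_ite_eq', Finset.mem_univ, if_true,
      Finset.sum_const, Finset.card_univ, Fintype.card_fin, nsmul_eq_mul]
    field_simp
    ring
  refine ⟨pairSetting k hk, pairProfile hk p, groupSize_pairSetting hk, fun _ => c,
    ⟨fun ℓ => pairAgent k hk (ℓ, 1), fun a b h => ?_, fun ℓ => ?_⟩, fun y _ => ?_, ?_, ?_⟩
  · simpa using h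
  · simp [pairProfile, p, outlierProfile]
  · rw [hSC, hSC]
    refine mul_le_mul_of_nonneg_left (Finset.sum_le_sum fun ℓ _ => ?_) (by positivity)
    have htri := abs_sub_le r (y ℓ) c
    rw [abs_sub_comm (y ℓ) c] at htri
    rw [sub_self, abs_zero]
    nlinarith [abs_nonneg (c - y ℓ)]
  · rw [hopt]
    norm_num
  · rw [hopt, hout]

/-- In the sum-variant, for every `k ≥ 3`, every (valid) two-phase mechanism has
approximation ratio at least `3 − 2/k`: there is an instance with `m = k` groups of two
agents each on which the output's social cost is at least `(3 − 2/k)` times the minimum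
social cost over all feasible solutions. -/
theorem stmt16 (k : ℕ) (hk : 3 ≤ k) (M : TwoPhase k) (hM : M.Valid) :
    ∃ (S : FLSetting k k) (x : Fin S.n → ℝ),
      (∀ j : Fin k, groupSize S j = 2) ∧
      ∃ yopt : Fin k → ℝ, Feasible S x yopt ∧
        (∀ y : Fin k → ℝ, Feasible S x y → SC (sumCost k) S x yopt ≤ SC (sumCost k) S x y) ∧
        (3 - 2 / (k : ℝ)) * SC (sumCost k) S x yopt ≤ SC (sumCost k) S x (outcome M S x) := by
  obtain ⟨S, x, hsize, yopt, hfeas, hmin, -, hratio⟩ :=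
    exists_pair_instance_ratio k (by omega) M hM
  exact ⟨S, x, hsize, yopt, hfeas, hmin, hratio.le⟩

end
end

section
/- For every k ≥ 3, the mechanisms M_k^sum and M_k^max are strategyproof, both in the sum-variant and in the max-variant. -/
open Finset

noncomputable section

/-- The mechanism `M_k^max`: each group's representative is the position of its
`⌈n_g/2⌉`-th leftmost agent, and for each `ℓ ∈ {1,…,k}` the `ℓ`-th facility is opened
at the `(⌈m/2⌉ + ℓ − ⌈k/2⌉)`-th leftmost representative location. -/
def MmaxMech (k : ℕ) : TwoPhase k where
  rep := fun _ S => kthLeftmost S ((Multiset.card S + 1) / 2)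
  sel := fun m R ℓ => kthLeftmost R ((m + 1) / 2 + (ℓ.val + 1) - (k + 1) / 2)

/-- In a sorted list, the entry at position `t` lies in a lower set `s` iff more than `t`
entries lie in `s`. -/
theorem List.getD_mem_lowerSet_iff_lt_countP {s : Set ℝ} [DecidablePred (· ∈ s)]
    (hs : IsLowerSet s) (d : ℝ) (l : List ℝ) (hl : l.Pairwise (· ≤ ·)) (t : ℕ)
    (ht : t < l.length) : l.getD t d ∈ s ↔ t < l.countP (· ∈ s) := by
  induction l generalizing t with
  | nil => simp at ht
  | cons a l ih =>
    rw [List.pairwise_cons] at hl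
    obtain ⟨hal, hl⟩ := hl
    by_cases ha : a ∈ s
    · cases t with
      | zero => simp [ha]
      | succ t =>
        have := ih hl t (by simpa using ht)
        simpa [ha] using this
    · have hnone : ∀ b ∈ l, b ∉ s := fun b hb hbs => ha (hs (hal b hb) hbs)
      have hcount : (a :: l).countP (· ∈ s) = 0 := by
        rw [List.countP_eq_zero]
        simpa [ha] using hnone
      rw [hcount]
      have hmem : (a :: l).getD t d ∈ a :: l := by
        rw [List.getD_eq_getElem _ _ ht]
        exact List.getElem_mem ht
      rcases List.mem_cons.1 hmem with h | h
      · rw [h]; simpa using ha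
      · simpa using hnone _ h

/-- If membership in a lower set passes from each `f j` to `g j`, it passes from every order
statistic of `f` to the corresponding order statistic of `g`. -/
theorem kthLeftmost_map_mem_lowerSet {ι : Type*} (S : Multiset ι) {f g : ι → ℝ} {s : Set ℝ}
    (hs : IsLowerSet s) (hfg : ∀ j, f j ∈ s → g j ∈ s) (t : ℕ)
    (hf : kthLeftmost (S.map f) t ∈ s) : kthLeftmost (S.map g) t ∈ s := by
  classical
  unfold kthLeftmost at *
  by_cases ht : t - 1 < Multiset.card S
  · have key : ∀ h : ι → ℝ, ((S.map h).sort (· ≤ ·)).getD (t - 1) 0 ∈ s ↔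
        t - 1 < (S.map h).countP (· ∈ s) := fun h => by
      rw [List.getD_mem_lowerSet_iff_lt_countP hs 0 _ (Multiset.pairwise_sort _ _) _ (by simpa),
        ← Multiset.coe_countP, Multiset.sort_eq]
    rw [key] at hf ⊢
    refine hf.trans_le ?_
    rw [Multiset.countP_map, Multiset.countP_map]
    exact Multiset.card_le_card (Multiset.monotone_filter_right S fun j => hfg j)
  · rw [List.getD_eq_default _ _ (by simpa using ht)] at hf ⊢
    exact hf

/-- A two-phase mechanism both of whose phases pick order statistics whose ranks depend only
on the number of available positions, the number of groups and the facility. -/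
def TwoPhase.IsOrderStatistic {k : ℕ} (M : TwoPhase k) : Prop :=
  (∃ ρ : ℕ → ℕ → ℕ, ∀ m S, M.rep m S = kthLeftmost S (ρ m (Multiset.card S))) ∧
  ∃ σ : ℕ → Fin k → ℕ, ∀ m R ℓ, M.sel m R ℓ = kthLeftmost R (σ m ℓ)

theorem TwoPhase.IsOrderStatistic.outcome_mem_lowerSet {k m : ℕ} {M : TwoPhase k}
    (hM : M.IsOrderStatistic) (S : FLSetting k m) {x x' : Fin S.n → ℝ} {s : Set ℝ}
    (hs : IsLowerSet s) (hx : ∀ i, x i ∈ s → x' i ∈ s) (ℓ : Fin k)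
    (h : outcome M S x ℓ ∈ s) : outcome M S x' ℓ ∈ s := by
  obtain ⟨⟨ρ, hρ⟩, σ, hσ⟩ := hM
  unfold outcome repsMS at *
  rw [hσ] at h ⊢
  refine kthLeftmost_map_mem_lowerSet _ hs (fun j hj => ?_) _ h
  unfold groupMS at *
  rw [hρ, Multiset.card_map] at hj ⊢
  exact kthLeftmost_map_mem_lowerSet _ hs hx _ hj

/-- No misreport of an agent brings any single facility closer to her. -/
theorem TwoPhase.IsOrderStatistic.abs_sub_outcome_le {k m : ℕ} {M : TwoPhase k}
    (hM : M.IsOrderStatistic) (S : FLSetting k m) (x : Fin S.n → ℝ) (i : Fin S.n) (x' : ℝ)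
    (ℓ : Fin k) :
    |x i - outcome M S x ℓ| ≤ |x i - outcome M S (Function.update x i x') ℓ| := by
  rcases lt_trichotomy (outcome M S x ℓ) (x i) with hlt | heq | hgt
  · have h : outcome M S (Function.update x i x') ℓ ≤ outcome M S x ℓ :=
      hM.outcome_mem_lowerSet S (x := x) (isLowerSet_Iic (outcome M S x ℓ)) (fun j hj => by
        rcases eq_or_ne j i with rfl | hne
        · exact absurd hj hlt.not_ge
        · rwa [Function.update_of_ne hne]) ℓ Set.self_mem_Iic
    rw [abs_of_pos (sub_pos.2 hlt), abs_of_pos (sub_pos.2 (h.trans_lt hlt))]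
    linarith
  · simp [heq]
  · have h : outcome M S x ℓ ≤ outcome M S (Function.update x i x') ℓ := by
      by_contra! hcon
      exact lt_irrefl (outcome M S x ℓ) (hM.outcome_mem_lowerSet S (x' := x)
        (isLowerSet_Iio (outcome M S x ℓ)) (fun j hj => by
          rcases eq_or_ne j i with rfl | hne
          · exact hgt
          · rwa [Function.update_of_ne hne] at hj) ℓ hcon)
    rw [abs_of_neg (sub_neg.2 hgt), abs_of_neg (sub_neg.2 (hgt.trans_le h))]
    linarith

theorem TwoPhase.IsOrderStatistic.strategyproof_sumCost {k : ℕ} {M : TwoPhase k}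
    (hM : M.IsOrderStatistic) : Strategyproof (sumCost k) M :=
  fun _ S x i x' => Finset.sum_le_sum fun ℓ _ => hM.abs_sub_outcome_le S x i x' ℓ

theorem TwoPhase.IsOrderStatistic.strategyproof_maxCost {k : ℕ} {M : TwoPhase k}
    (hM : M.IsOrderStatistic) : Strategyproof (maxCost k) M :=
  fun _ S x i x' => ciSup_mono (Set.finite_range _).bddAbove
    fun ℓ => hM.abs_sub_outcome_le S x i x' ℓ

theorem isOrderStatistic_MsumMech (k : ℕ) : (MsumMech k).IsOrderStatistic :=
  ⟨⟨fun _ c => (c + 1) / 2, fun _ _ => rfl⟩,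
    fun m ℓ => ⌈(((ℓ.val + 1) * m : ℕ) : ℝ) / ((k : ℝ) + 1)⌉₊, fun _ _ _ => rfl⟩

theorem isOrderStatistic_MmaxMech (k : ℕ) : (MmaxMech k).IsOrderStatistic :=
  ⟨⟨fun _ c => (c + 1) / 2, fun _ _ => rfl⟩,
    fun m ℓ => (m + 1) / 2 + (ℓ.val + 1) - (k + 1) / 2, fun _ _ _ => rfl⟩

/-- For every `k ≥ 3`, the mechanisms `M_k^sum` and `M_k^max` are strategyproof in both
the sum-variant and the max-variant. -/
theorem stmt19 (k : ℕ) (hk : 3 ≤ k) :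
    Strategyproof (sumCost k) (MsumMech k) ∧ Strategyproof (maxCost k) (MsumMech k) ∧
    Strategyproof (sumCost k) (MmaxMech k) ∧ Strategyproof (maxCost k) (MmaxMech k) :=
  ⟨(isOrderStatistic_MsumMech k).strategyproof_sumCost,
    (isOrderStatistic_MsumMech k).strategyproof_maxCost,
    (isOrderStatistic_MmaxMech k).strategyproof_sumCost,
    (isOrderStatistic_MmaxMech k).strategyproof_maxCost⟩

end
end
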